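/- arXiv:1903.06970 — 7 statements merged into one kernel-verified Lean document; each statement's English description precedes it below -/
import Mathlib

section
/- Suppose X ⊆ ℝ^{n_x} contains the origin in its interior and is robustly invariant for the system x_{k+1} = f(x_k, w_k) with f : ℝ^{n_x} × ℝ^{n_w} → ℝ^{n_x} continuous and disturbance set W ⊆ ℝ^{n_w} bounded, and suppose there exist a continuous function V : X → [0,∞), K∞-functions α1, α2, α3 and a K-function σ such that α1(‖x‖) ≤ V(x) ≤ α2(‖x‖) and V(f(x,w)) − V(x) ≤ −α3(‖x‖) + σ(‖w‖) for all x ∈ X and w ∈ W. Then the origin is ISS for the system with region of attraction X, i.e. there exist a KL-function β and a K-function γ such that every trajectory with x_0 ∈ X and w_t ∈ W for all t satisfies x_k ∈ X for all k and ‖x_k‖ ≤ β(‖x_0‖, k) + γ(sup{‖w_t‖ : 0 ≤ t ≤ k−1}) for all k ≥ 1. -/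
/-!
Write `α₄ = α₃ ∘ α₂⁻¹` and `ρ = α₄ / 2`. Along a trajectory whose disturbances up to time `k` are
bounded by `r`, the values `v j = V (x j)` satisfy `v (j+1) ≤ v j - 2 * ρ (v j) + s`, `s = σ r`.
With `b = α₄⁻¹ (2 * s) + s`, the sublevel set `v ≤ b` is never left once entered, and outside of it
`v (j+1) ≤ v j - ρ (v j)`. As long as `v` stays outside, it decreases, so every decrement
`ρ (v i)` with `i < j` is at least `ρ (v j)`, and telescoping gives `v j + j * ρ (v j) ≤ v 0`
(`le_or_add_mul_le`). Hence `v k ≤ b` or `v k ≤ (id + k * ρ)⁻¹ (v 0)`, and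
`(r, t) ↦ (id + t * ρ)⁻¹ r` is a KL-function (`exists_kl_inverse`). Applying `α₁⁻¹` gives the
estimate with `β r t = α₁⁻¹ ((id + t * ρ)⁻¹ (α₂ r))` and `γ r = α₁⁻¹ (α₄⁻¹ (2 * σ r) + σ r)`.
-/

open Filter Topology MeasureTheory Bornology

/-- A K-function: continuous, strictly increasing on `[0,∞)` and vanishing at `0`. -/
def IsKFun (φ : ℝ → ℝ) : Prop :=
  ContinuousOn φ (Set.Ici 0) ∧ StrictMonoOn φ (Set.Ici 0) ∧ φ 0 = 0

/-- A K∞-function: a K-function that tends to `∞`. -/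
def IsKInfFun (φ : ℝ → ℝ) : Prop :=
  IsKFun φ ∧ Tendsto φ atTop atTop

/-- A KL-function. -/
def IsKLFun (β : ℝ → ℝ → ℝ) : Prop :=
  (∀ t ∈ Set.Ici (0:ℝ), IsKFun fun s => β s t) ∧
  ∀ s ∈ Set.Ici (0:ℝ), AntitoneOn (β s) (Set.Ici 0) ∧ Tendsto (β s) atTop (𝓝 0)

lemma IsKFun.nonneg {φ : ℝ → ℝ} (h : IsKFun φ) {s : ℝ} (hs : 0 ≤ s) : 0 ≤ φ s := by
  have := h.2.1.monotoneOn (Set.mem_Ici.2 le_rfl) (Set.mem_Ici.2 hs) hs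
  rwa [h.2.2] at this

lemma IsKFun.mono {φ : ℝ → ℝ} (h : IsKFun φ) {s t : ℝ} (hs : 0 ≤ s) (hst : s ≤ t) :
    φ s ≤ φ t :=
  h.2.1.monotoneOn (Set.mem_Ici.2 hs) (Set.mem_Ici.2 (hs.trans hst)) hst

lemma IsKFun.comp {φ ψ : ℝ → ℝ} (h : IsKFun φ) (h' : IsKFun ψ) : IsKFun fun s => φ (ψ s) := by
  have hm : Set.MapsTo ψ (Set.Ici 0) (Set.Ici 0) := fun s hs => h'.nonneg hs
  exact ⟨h.1.comp h'.1 hm, h.2.1.comp h'.2.1 hm, by simp only [h'.2.2, h.2.2]⟩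

lemma IsKFun.add {φ ψ : ℝ → ℝ} (h : IsKFun φ) (h' : IsKFun ψ) : IsKFun fun s => φ s + ψ s :=
  ⟨h.1.add h'.1, fun _ ha _ hb hab => add_lt_add (h.2.1 ha hb hab) (h'.2.1 ha hb hab),
    by simp only [h.2.2, h'.2.2, add_zero]⟩

lemma IsKFun.const_mul {φ : ℝ → ℝ} (h : IsKFun φ) {c : ℝ} (hc : 0 < c) :
    IsKFun fun s => c * φ s :=
  ⟨continuousOn_const.mul h.1, fun _ ha _ hb hab => mul_lt_mul_of_pos_left (h.2.1 ha hb hab) hc,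
    by simp only [h.2.2, mul_zero]⟩

/-- The inverse is obtained from an order automorphism of `ℝ≥0`, so that continuity comes for
free, and is extended to negative arguments by the value `0`. -/
lemma IsKInfFun.exists_inverse {φ : ℝ → ℝ} (h : IsKInfFun φ) :
    ∃ ψ : ℝ → ℝ, IsKInfFun ψ ∧ (∀ s, 0 ≤ s → φ (ψ s) = s) ∧ ∀ s, 0 ≤ s → ψ (φ s) = s := by
  let g : NNReal → NNReal := fun x => ⟨φ x, h.1.nonneg x.2⟩
  have hg : StrictMono g := fun a b hab =>
    NNReal.coe_lt_coe.1 (h.1.2.1 (Set.mem_Ici.2 a.2) (Set.mem_Ici.2 b.2) hab)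
  have hsurj : Function.Surjective g := by
    intro y
    obtain ⟨M, hM, hM0⟩ := ((h.2.eventually_ge_atTop (y : ℝ)).and (eventually_ge_atTop 0)).exists
    have hc : ContinuousOn φ (Set.Icc 0 M) := h.1.1.mono Set.Icc_subset_Ici_self
    obtain ⟨x, hx, hxy⟩ := intermediate_value_Icc hM0 hc
      (show (y : ℝ) ∈ Set.Icc (φ 0) (φ M) from ⟨by rw [h.1.2.2]; exact y.2, hM⟩)
    exact ⟨⟨x, hx.1⟩, NNReal.eq hxy⟩
  let e : NNReal ≃o NNReal := hg.orderIsoOfSurjective g hsurj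
  have hr : ∀ s, 0 ≤ s → φ (e.symm s.toNNReal) = s := by
    intro s hs
    have h1 : g (e.symm s.toNNReal) = s.toNNReal := e.apply_symm_apply _
    have h2 := congrArg NNReal.toReal h1
    rwa [Real.coe_toNNReal s hs] at h2
  have hl : ∀ s, 0 ≤ s → ((e.symm (φ s).toNNReal : NNReal) : ℝ) = s := by
    intro s hs
    lift s to NNReal using hs
    have h1 : (φ s).toNNReal = e s :=
      NNReal.eq (Real.coe_toNNReal _ (h.1.nonneg s.2))
    rw [h1, e.symm_apply_apply]
  refine ⟨fun s => e.symm s.toNNReal, ⟨⟨?_, ?_, ?_⟩, ?_⟩, hr, hl⟩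
  · exact (NNReal.continuous_coe.comp
      (e.symm.continuous.comp continuous_real_toNNReal)).continuousOn
  · intro a ha b hb hab
    exact NNReal.coe_lt_coe.2
      (e.symm.strictMono ((Real.toNNReal_lt_toNNReal_iff_of_nonneg ha).2 hab))
  · have := hl 0 le_rfl
    rwa [h.1.2.2] at this
  · exact NNReal.tendsto_coe_atTop.2 (e.symm.tendsto_atTop.comp tendsto_real_toNNReal_atTop)

/-- The inverses of `s ↦ s + t * ρ s`, `t ≥ 0`, form a KL-function. -/
lemma exists_kl_inverse {ρ : ℝ → ℝ} (hρ : IsKFun ρ) :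
    ∃ θ : ℝ → ℝ → ℝ, IsKLFun θ ∧
      ∀ t, 0 ≤ t → ∀ r v, 0 ≤ r → 0 ≤ v → v + t * ρ v ≤ r → v ≤ θ r t := by
  have key : ∀ t : ℝ, 0 ≤ t → IsKInfFun fun s => s + t * ρ s := by
    intro t ht
    refine ⟨⟨continuousOn_id.add (continuousOn_const.mul hρ.1), ?_, ?_⟩, ?_⟩
    · intro a ha b hb hab
      have := mul_le_mul_of_nonneg_left (hρ.mono ha hab.le) ht
      simp only
      linarith
    · simp [hρ.2.2]
    · refine tendsto_atTop_mono' _ ?_ tendsto_id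
      filter_upwards [eventually_ge_atTop 0] with s hs
      have := mul_nonneg ht (hρ.nonneg hs)
      simp only [id]
      linarith
  have ex : ∀ t : ℝ, ∃ ψ : ℝ → ℝ, 0 ≤ t → IsKInfFun ψ ∧ (∀ s, 0 ≤ s → ψ s + t * ρ (ψ s) = s) ∧
      ∀ s, 0 ≤ s → ψ (s + t * ρ s) = s := by
    intro t
    by_cases ht : 0 ≤ t
    · obtain ⟨ψ, h1, h2, h3⟩ := (key t ht).exists_inverse
      exact ⟨ψ, fun _ => ⟨h1, h2, h3⟩⟩
    · exact ⟨id, fun h => absurd h ht⟩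
  choose ψ hψ using ex
  refine ⟨fun s t => ψ t s, ⟨fun t ht => (hψ t ht).1.1, fun s hs => ⟨?_, ?_⟩⟩, ?_⟩
  · intro a ha b hb hab
    by_contra! hlt
    have h0 := (hψ a ha).1.1.nonneg hs
    have e1 := (hψ a ha).2.1 s hs
    have e2 := (hψ b hb).2.1 s hs
    have h1 : a * ρ (ψ a s) ≤ b * ρ (ψ b s) :=
      mul_le_mul hab (hρ.mono h0 hlt.le) (hρ.nonneg h0) hb
    linarith
  · rw [Metric.tendsto_atTop]
    intro ε hε
    have hρε : 0 < ρ ε := by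
      have := hρ.2.1 (Set.mem_Ici.2 le_rfl) (Set.mem_Ici.2 hε.le) hε
      rwa [hρ.2.2] at this
    refine ⟨s / ρ ε, fun t ht => ?_⟩
    have ht0 : 0 ≤ t := (div_nonneg hs hρε.le).trans ht
    have h0 := (hψ t ht0).1.1.nonneg hs
    rw [Real.dist_eq, sub_zero, abs_of_nonneg h0]
    by_contra! hle
    have e1 := (hψ t ht0).2.1 s hs
    have h1 := mul_le_mul_of_nonneg_left (hρ.mono hε.le hle) ht0
    have h2 := (div_le_iff₀ hρε).1 ht
    linarith
  · intro t ht r v hr hv hle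
    have := (hψ t ht).1.1.mono (add_nonneg hv (mul_nonneg ht (hρ.nonneg hv))) hle
    rwa [(hψ t ht).2.2 v hv] at this

/-- A scalar comparison principle. Here `c` is a threshold above which the decrement `ρ` dominates
the perturbation `s`; `v ≤ c + s` persists once reached, and until then each step decreases `v j` by at
least `ρ (v j)`, which telescopes by monotonicity of `ρ`. -/
lemma le_or_add_mul_le {ρ : ℝ → ℝ} (hρ : IsKFun ρ) {v : ℕ → ℝ} (hv : ∀ j, 0 ≤ v j) {s c : ℝ}
    (hs : 0 ≤ s) (hc : ∀ u, c ≤ u → s ≤ ρ u) {k : ℕ}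
    (hstep : ∀ j < k, v (j + 1) ≤ v j - 2 * ρ (v j) + s) :
    ∀ j ≤ k, v j ≤ c + s ∨ v j + j * ρ (v j) ≤ v 0 := by
  intro j
  induction j with
  | zero => intro _; right; simp
  | succ j ih =>
    intro hj
    have hst := hstep j hj
    have hn := hρ.nonneg (hv j)
    by_cases hb : v j ≤ c + s
    · left
      rcases le_total (v j) c with h | h
      · linarith
      · linarith [hc _ h]
    · right
      have h1 := (ih (by omega)).resolve_left hb
      have h2 := hc (v j) (by linarith)
      have h3 : ρ (v (j + 1)) ≤ ρ (v j) := hρ.mono (hv _) (by linarith)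
      have h4 : ((j : ℝ) + 1) * ρ (v (j + 1)) ≤ (j + 1) * ρ (v j) :=
        mul_le_mul_of_nonneg_left h3 (by positivity)
      push_cast
      linarith

/-- Lemma 1 (Jiang & Wang): an ISS-Lyapunov function implies that the origin is ISS
with region of attraction `X`. -/
theorem statement0 {nx nw : ℕ}
    (f : EuclideanSpace ℝ (Fin nx) → EuclideanSpace ℝ (Fin nw) → EuclideanSpace ℝ (Fin nx))
    (X : Set (EuclideanSpace ℝ (Fin nx))) (W : Set (EuclideanSpace ℝ (Fin nw)))
    (hf : Continuous fun p : EuclideanSpace ℝ (Fin nx) × EuclideanSpace ℝ (Fin nw) => f p.1 p.2)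
    (hW : IsBounded W)
    (h0X : (0 : EuclideanSpace ℝ (Fin nx)) ∈ interior X)
    (hinv : ∀ x ∈ X, ∀ w ∈ W, f x w ∈ X)
    (V : EuclideanSpace ℝ (Fin nx) → ℝ)
    (hVc : ContinuousOn V X) (hVnn : ∀ x ∈ X, 0 ≤ V x)
    (α₁ α₂ α₃ σ : ℝ → ℝ)
    (hα₁ : IsKInfFun α₁) (hα₂ : IsKInfFun α₂) (hα₃ : IsKInfFun α₃) (hσ : IsKFun σ)
    (hlow : ∀ x ∈ X, α₁ ‖x‖ ≤ V x) (hup : ∀ x ∈ X, V x ≤ α₂ ‖x‖)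
    (hdec : ∀ x ∈ X, ∀ w ∈ W, V (f x w) - V x ≤ -α₃ ‖x‖ + σ ‖w‖) :
    ∃ (β : ℝ → ℝ → ℝ) (γ : ℝ → ℝ), IsKLFun β ∧ IsKFun γ ∧
      ∀ (x : ℕ → EuclideanSpace ℝ (Fin nx)) (w : ℕ → EuclideanSpace ℝ (Fin nw)),
        x 0 ∈ X → (∀ t, w t ∈ W) → (∀ k, x (k+1) = f (x k) (w k)) →
        (∀ k, x k ∈ X) ∧
        ∀ k, 1 ≤ k → ‖x k‖ ≤ β ‖x 0‖ (k : ℝ) + γ (⨆ t : Fin k, ‖w (t : ℕ)‖) := by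
  obtain ⟨ι₁, hι₁, -, hl₁⟩ := hα₁.exists_inverse
  obtain ⟨ι₂, hι₂, -, hl₂⟩ := hα₂.exists_inverse
  obtain ⟨ι₃, hι₃, hr₃, -⟩ := hα₃.exists_inverse
  have hρ : IsKFun fun s => (1 / 2) * α₃ (ι₂ s) := (hα₃.1.comp hι₂.1).const_mul (by norm_num)
  obtain ⟨θ, hθ, hθle⟩ := exists_kl_inverse hρ
  have hb : IsKFun fun r => α₂ (ι₃ (2 * σ r)) + σ r :=
    (hα₂.1.comp (hι₃.1.comp (hσ.const_mul two_pos))).add hσ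
  refine ⟨fun s t => ι₁ (θ (α₂ s) t), fun r => ι₁ (α₂ (ι₃ (2 * σ r)) + σ r),
    ⟨fun t ht => hι₁.1.comp ((hθ.1 t ht).comp hα₂.1), fun s hs => ⟨?_, ?_⟩⟩,
    hι₁.1.comp hb, ?_⟩
  · intro a ha c hc hac
    have hs2 := hα₂.1.nonneg hs
    exact hι₁.1.mono ((hθ.1 c hc).nonneg hs2) ((hθ.2 _ hs2).1 ha hc hac)
  · have hs2 := hα₂.1.nonneg hs
    have h1 : Tendsto ι₁ (𝓝[Set.Ici 0] 0) (𝓝 0) := by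
      have := hι₁.1.1 0 (Set.mem_Ici.2 le_rfl)
      rwa [ContinuousWithinAt, hι₁.1.2.2] at this
    refine h1.comp (tendsto_nhdsWithin_iff.2 ⟨(hθ.2 _ hs2).2, ?_⟩)
    filter_upwards [eventually_ge_atTop 0] with t ht
    exact (hθ.1 t ht).nonneg hs2
  · intro x w hx0 hw hx
    have hX : ∀ k, x k ∈ X := by
      intro k
      induction k with
      | zero => exact hx0
      | succ k ih => rw [hx]; exact hinv _ ih _ (hw k)
    refine ⟨hX, fun k _ => ?_⟩
    set r := ⨆ t : Fin k, ‖w (t : ℕ)‖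
    have hr0 : 0 ≤ r := Real.iSup_nonneg fun _ => norm_nonneg _
    have hwr : ∀ j < k, ‖w j‖ ≤ r := fun j hj =>
      le_ciSup (f := fun t : Fin k => ‖w (t : ℕ)‖) (Set.finite_range _).bddAbove ⟨j, hj⟩
    have hs0 := hσ.nonneg hr0
    have hV := fun j => hVnn _ (hX j)
    have hstep : ∀ j < k, V (x (j + 1)) ≤
        V (x j) - 2 * ((1 / 2) * α₃ (ι₂ (V (x j)))) + σ r := by
      intro j hj
      have h1 := hdec _ (hX j) _ (hw j)
      rw [← hx] at h1
      have h2 := hσ.mono (norm_nonneg _) (hwr j hj)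
      have h3 := hι₂.1.mono (hV j) (hup _ (hX j))
      rw [hl₂ _ (norm_nonneg _)] at h3
      have h4 := hα₃.1.mono (hι₂.1.nonneg (hV j)) h3
      linarith
    have hs2 : 0 ≤ 2 * σ r := by linarith
    have hi3 := hι₃.1.nonneg hs2
    have hthr : ∀ u, α₂ (ι₃ (2 * σ r)) ≤ u → σ r ≤ (1 / 2) * α₃ (ι₂ u) := by
      intro u hu
      have h1 := hι₂.1.mono (hα₂.1.nonneg hi3) hu
      rw [hl₂ _ hi3] at h1
      have h2 := hα₃.1.mono hi3 h1
      rw [hr₃ _ hs2] at h2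
      linarith
    have hxk : ‖x k‖ ≤ ι₁ (V (x k)) := by
      have := hι₁.1.mono (hα₁.1.nonneg (norm_nonneg _)) (hlow _ (hX k))
      rwa [hl₁ _ (norm_nonneg _)] at this
    have hA := hα₂.1.nonneg (norm_nonneg (x 0))
    have hk0 : (0 : ℝ) ≤ k := Nat.cast_nonneg k
    have hβ0 := hι₁.1.nonneg ((hθ.1 k hk0).nonneg hA)
    have hγ0 := hι₁.1.nonneg (hb.nonneg hr0)
    rcases le_or_add_mul_le hρ hV hs0 hthr hstep k le_rfl with h | h
    · have := hι₁.1.mono (hV k) h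
      linarith
    · have h1 := hθle k hk0 _ _ hA (hV k) (h.trans (hup _ hx0))
      have := hι₁.1.mono (hV k) h1
      linarith
end

section
/- Suppose X ⊆ ℝ^{n_x} is bounded and robustly invariant for the system x_{k+1} = f(x_k, w_k) with f continuous, and suppose there exist a KL-function β and a K-function γ such that every trajectory with x_0 ∈ X and w_t ∈ W for all t satisfies ‖x_k‖ ≤ β(‖x_0‖, k) + γ(sup{‖w_t‖ : 0 ≤ t ≤ k−1}) for all k ≥ 1. Let μ be a Borel probability measure on ℝ^{n_w} with μ(W) = 1 and μ{w : ‖w‖ ≤ λ} > 0 for every λ > 0, and let X_f ⊆ ℝ^{n_x} be a Borel set containing the origin in its interior. Then for every x_0 ∈ X there exists m ∈ ℕ such that P^m(x_0, X_f) > 0. -/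
/-!
Choose `ε > 0` with the `ε`-ball around the origin contained in `X_f`, a horizon `k ≥ 1` with
`β(‖x₀‖, k) < ε / 2`, and a radius `λ > 0` with `γ(λ) < ε / 2`. By the stability bound, any
`k` disturbances taken from `W ∩ {‖w‖ ≤ λ}` steer `x₀` into the `ε`-ball, so the event in
question contains a product set. Each factor has positive measure (`measure_inter_pos`), hence
so does the product.
-/

open Filter Topology MeasureTheory Bornology

/-- The iterated map: `Φ_0 = x`, `Φ_{j+1} = f(Φ_j, w_j)`. -/
def iterMap {S D : Type*} (f : S → D → S) : (k : ℕ) → S → (Fin k → D) → S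
  | 0, x, _ => x
  | k+1, x, w => f (iterMap f k x (Fin.init w)) (w (Fin.last k))

/-- The `k`-step transition probability
`P^k(x, A) = μ^{⊗k}{(w_0,…,w_{k−1}) : Φ_k(x; w_0,…,w_{k−1}) ∈ A}`. -/
noncomputable def transProb {S D : Type*} [MeasurableSpace D] (μ : Measure D)
    (f : S → D → S) (k : ℕ) (x : S) (A : Set S) : ENNReal :=
  Measure.pi (fun _ : Fin k => μ) {w : Fin k → D | iterMap f k x w ∈ A}

/-- A set of full outer measure meets every measurable set of positive measure in a set of
positive outer measure. The full set `W` itself need not be measurable: only the Carathéodory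
property of `B` is used. -/
lemma measure_inter_pos {D : Type*} [MeasurableSpace D] (μ : Measure D) [IsProbabilityMeasure μ]
    {W B : Set D} (hW : μ W = 1) (hB : MeasurableSet B) (hpos : 0 < μ B) : 0 < μ (W ∩ B) := by
  rw [pos_iff_ne_zero]
  intro h0
  have h1 := measure_inter_add_sdiff (μ := μ) W hB
  rw [h0, zero_add, hW] at h1
  have h2 : μ (W \ B) ≤ μ Bᶜ := measure_mono fun x hx => hx.2
  rw [h1, prob_compl_eq_one_sub hB] at h2
  exact absurd h2 (not_le.mpr (ENNReal.sub_lt_self ENNReal.one_ne_top one_ne_zero hpos.ne'))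

/-- Under an ISS bound on a bounded robustly invariant set, and a disturbance distribution
placing positive mass on every ball around the origin, every neighbourhood `X_f` of the origin
is reached with positive probability in some number of steps. -/
theorem statement4 {nx nw : ℕ}
    (f : EuclideanSpace ℝ (Fin nx) → EuclideanSpace ℝ (Fin nw) → EuclideanSpace ℝ (Fin nx))
    (hf : Continuous fun p : EuclideanSpace ℝ (Fin nx) × EuclideanSpace ℝ (Fin nw) => f p.1 p.2)
    (X : Set (EuclideanSpace ℝ (Fin nx))) (W : Set (EuclideanSpace ℝ (Fin nw)))
    (hXb : IsBounded X)
    (hinv : ∀ x ∈ X, ∀ w ∈ W, f x w ∈ X)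
    (β : ℝ → ℝ → ℝ) (γ : ℝ → ℝ) (hβ : IsKLFun β) (hγ : IsKFun γ)
    (hiss : ∀ (x : ℕ → EuclideanSpace ℝ (Fin nx)) (w : ℕ → EuclideanSpace ℝ (Fin nw)),
      x 0 ∈ X → (∀ t, w t ∈ W) → (∀ k, x (k+1) = f (x k) (w k)) →
      ∀ k, 1 ≤ k → ‖x k‖ ≤ β ‖x 0‖ (k : ℝ) + γ (⨆ t : Fin k, ‖w (t : ℕ)‖))
    (μ : Measure (EuclideanSpace ℝ (Fin nw))) [IsProbabilityMeasure μ]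
    (hμW : μ W = 1)
    (hμball : ∀ lam > (0:ℝ), 0 < μ {w | ‖w‖ ≤ lam})
    (Xf : Set (EuclideanSpace ℝ (Fin nx)))
    (hXfm : MeasurableSet Xf)
    (h0Xf : (0 : EuclideanSpace ℝ (Fin nx)) ∈ interior Xf) :
    ∀ x₀ ∈ X, ∃ m : ℕ, 0 < transProb μ f m x₀ Xf := by
  intro x₀ hx₀
  obtain ⟨ε, hε, hball⟩ := Metric.isOpen_iff.mp isOpen_interior 0 h0Xf
  obtain ⟨k, hk1, hkβ⟩ : ∃ k : ℕ, 1 ≤ k ∧ β ‖x₀‖ (k : ℝ) < ε / 2 := by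
    have ht : Tendsto (fun k : ℕ => β ‖x₀‖ (k : ℝ)) atTop (𝓝 0) :=
      (hβ.2 ‖x₀‖ (norm_nonneg _)).2.comp tendsto_natCast_atTop_atTop
    exact ((eventually_ge_atTop 1).and (ht.eventually_lt_const (half_pos hε))).exists
  obtain ⟨hγc, hγm, hγ0⟩ := hγ
  obtain ⟨lam, hlam, hγlam⟩ : ∃ lam > (0 : ℝ), γ lam < ε / 2 := by
    have hc : Tendsto γ (𝓝[>] 0) (𝓝 0) := by
      have h := hγc 0 Set.self_mem_Ici
      rw [ContinuousWithinAt, hγ0] at h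
      exact h.mono_left (nhdsWithin_mono _ Set.Ioi_subset_Ici_self)
    obtain ⟨lam, h1, h2⟩ :=
      ((hc.eventually_lt_const (half_pos hε)).and self_mem_nhdsWithin).exists
    exact ⟨lam, h2, h1⟩
  refine ⟨k, ?_⟩
  have hBm : MeasurableSet {w : EuclideanSpace ℝ (Fin nw) | ‖w‖ ≤ lam} :=
    measurableSet_le measurable_norm measurable_const
  have hpos := measure_inter_pos μ hμW hBm (hμball lam hlam)
  have hprod : 0 < Measure.pi (fun _ : Fin k => μ)
      (Set.univ.pi fun _ : Fin k => W ∩ {w | ‖w‖ ≤ lam}) := by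
    rw [Measure.pi_pi, pos_iff_ne_zero]
    exact Finset.prod_ne_zero_iff.mpr fun _ _ => hpos.ne'
  refine hprod.trans_le (measure_mono fun w hw => ?_)
  have hw' : ∀ i, w i ∈ W ∧ ‖w i‖ ≤ lam := fun i => hw i (Set.mem_univ i)
  -- The stability bound concerns infinite sequences: extend `w` past `k` by its first entry.
  let v : ℕ → EuclideanSpace ℝ (Fin nw) := fun t => if h : t < k then w ⟨t, h⟩ else w ⟨0, hk1⟩
  have hvW : ∀ t, v t ∈ W := by
    intro t
    by_cases h : t < k
    · simpa [v, h] using (hw' ⟨t, h⟩).1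
    · simpa [v, h] using (hw' ⟨0, hk1⟩).1
  have hvw : (fun i : Fin k => v i) = w := by
    funext i
    simp [v]
  have hbound := hiss (fun j => iterMap f j x₀ fun i => v i) v hx₀ hvW (fun j => rfl) k hk1
  simp only [hvw] at hbound
  have : Nonempty (Fin k) := ⟨⟨0, hk1⟩⟩
  have hsup : (⨆ t : Fin k, ‖v (t : ℕ)‖) ≤ lam := ciSup_le fun t => by
    rw [congrFun hvw t]
    exact (hw' t).2
  have hsup0 : 0 ≤ ⨆ t : Fin k, ‖v (t : ℕ)‖ := Real.iSup_nonneg fun t => norm_nonneg _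
  have hγle := hγm.monotoneOn hsup0 hlam.le hsup
  refine interior_subset (s := Xf) (hball ?_)
  rw [mem_ball_zero_iff]
  have hbound' : ‖iterMap f k x₀ w‖ ≤ β ‖x₀‖ (k : ℝ) + γ (⨆ t : Fin k, ‖v (t : ℕ)‖) := hbound
  linarith
end

section
/- Let f : ℝ^{n_x} × ℝ^{n_w} → ℝ^{n_x} be continuous, let μ be a Borel probability measure on ℝ^{n_w} with μ(W) = 1, and let X_f ⊆ ℝ^{n_x} be a Borel set that is robustly invariant, i.e. f(x,w) ∈ X_f for all x ∈ X_f and all w ∈ W. Then for every initial state x_0 ∈ ℝ^{n_x} the sequence k ↦ P^k(x_0, X_f) is nondecreasing: P^{k+1}(x_0, X_f) ≥ P^k(x_0, X_f) for all k ∈ ℕ. -/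
/-! If `(w_0, …, w_{k-1})` steers `x₀` into `Xf` in `k` steps and `w_k ∈ W`, then robust invariance
keeps the state in `Xf` after `k + 1` steps. Hence the event defining `P^{k+1}(x₀, Xf)` contains the
product of the event defining `P^k(x₀, Xf)` with `W`, and under `μ^{⊗(k+1)} = μ ⊗ μ^{⊗k}` this product
has measure `μ W * P^k(x₀, Xf) = P^k(x₀, Xf)`. The product formula `Measure.prod_prod` holds for
arbitrary sets, so `W` need not be measurable. -/

open Filter Topology MeasureTheory Bornology

/-- If `X_f` is robustly invariant then `k ↦ P^k(x₀, X_f)` is nondecreasing. -/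
theorem statement5 {nx nw : ℕ}
    (f : EuclideanSpace ℝ (Fin nx) → EuclideanSpace ℝ (Fin nw) → EuclideanSpace ℝ (Fin nx))
    (hf : Continuous fun p : EuclideanSpace ℝ (Fin nx) × EuclideanSpace ℝ (Fin nw) => f p.1 p.2)
    (W : Set (EuclideanSpace ℝ (Fin nw)))
    (μ : Measure (EuclideanSpace ℝ (Fin nw))) [IsProbabilityMeasure μ]
    (hμW : μ W = 1)
    (Xf : Set (EuclideanSpace ℝ (Fin nx)))
    (hXfm : MeasurableSet Xf)
    (hinv : ∀ x ∈ Xf, ∀ w ∈ W, f x w ∈ Xf) :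
    ∀ (x₀ : EuclideanSpace ℝ (Fin nx)) (k : ℕ),
      transProb μ f k x₀ Xf ≤ transProb μ f (k+1) x₀ Xf := by
  intro x₀ k
  -- Splitting off the last disturbance `w_k` identifies `μ^{⊗(k+1)}` with `μ ⊗ μ^{⊗k}`.
  have e := measurePreserving_piFinSuccAbove
    (fun _ : Fin (k + 1) => μ) (Fin.last k)
  unfold transProb
  calc Measure.pi (fun _ : Fin k => μ) {w | iterMap f k x₀ w ∈ Xf}
      = (μ.prod (Measure.pi fun _ : Fin k => μ)) (W ×ˢ {w | iterMap f k x₀ w ∈ Xf}) := by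
        rw [Measure.prod_prod, hμW, one_mul]
    _ = Measure.pi (fun _ : Fin (k + 1) => μ)
          (MeasurableEquiv.piFinSuccAbove (fun _ => EuclideanSpace ℝ (Fin nw)) (Fin.last k) ⁻¹'
            (W ×ˢ {w | iterMap f k x₀ w ∈ Xf})) :=
        (e.measure_preimage_equiv _).symm
    _ ≤ Measure.pi (fun _ : Fin (k + 1) => μ) {w | iterMap f (k + 1) x₀ w ∈ Xf} := by
        refine measure_mono ?_
        rintro w ⟨hW, hX⟩
        have h : (MeasurableEquiv.piFinSuccAbove (fun _ => EuclideanSpace ℝ (Fin nw))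
            (Fin.last k) w).2 = Fin.init w := by
          funext j
          simp [MeasurableEquiv.piFinSuccAbove, Fin.init]
        rw [Set.mem_ofPred_eq, h] at hX
        exact hinv _ hX _ hW
end

section
/- Let X ⊆ ℝ^{n_x} be closed, W ⊆ ℝ^{n_w} bounded, f : X × W → X, and let μ be a Borel probability measure on ℝ^{n_w} with μ(W) = 1. Suppose V : X → [0,∞) is continuous, α1 and α3 are K∞-functions, σ is a K-function, α1(‖x‖) ≤ V(x) for all x ∈ X, w ↦ V(f(x,w)) is μ-integrable for each x ∈ X, and V(f(x,w)) − V(x) ≤ −α3(‖x‖) + σ(‖w‖) for all x ∈ X, w ∈ W. Let d ≥ ∫ σ(‖w‖) dμ(w) and let d' > d. Define Ṽ(x) = V(x)/(d'−d), C = {x ∈ X : α3(‖x‖) ≤ d'} and b = 1 + d/(d'−d). Then: (i) C is compact; (ii) for every c ∈ ℝ the sublevel set {x ∈ X : Ṽ(x) ≤ c} is compact; and (iii) for all x ∈ X, ∫ Ṽ(f(x,w)) dμ(w) − Ṽ(x) ≤ −1 + b·1_C(x), where 1_C is the indicator function of C. -/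
/-!
Both compactness claims are instances of one fact (`isCompact_sublevel`): a function continuous on
a closed set and bounded below there by `α ‖x‖` with `α → ∞` has closed and bounded sublevel sets.

For the drift inequality, integrate the decrease condition over `μ` to obtain
`∫ V (f x w) dμ - V x ≤ -α₃ ‖x‖ + d`, then divide by `d' - d > 0`. On `C` use `α₃ ‖x‖ ≥ 0`; off `C`
use `α₃ ‖x‖ > d'`.

The set `W` is not assumed measurable, so `μ W = 1` does not say that almost every `w` lies in `W`.
The properties needed almost everywhere (the decrease condition and a norm bound) do however define
null-measurable sets containing `W`, and those have full measure (`ae_of_forall_mem_of_measure_one`).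
-/

open Filter Topology MeasureTheory Bornology

lemma IsKFun.continuous_comp_norm {E : Type*} [NormedAddCommGroup E] {φ : ℝ → ℝ}
    (h : IsKFun φ) : Continuous fun x : E => φ ‖x‖ :=
  h.1.comp_continuous continuous_norm fun x => norm_nonneg x

lemma isCompact_sublevel {E : Type*} [NormedAddCommGroup E] [ProperSpace E] {X : Set E}
    (hX : IsClosed X) {g : E → ℝ} (hg : ContinuousOn g X) {α : ℝ → ℝ}
    (hα : Tendsto α atTop atTop) (hlow : ∀ x ∈ X, α ‖x‖ ≤ g x) (c : ℝ) :
    IsCompact {x ∈ X | g x ≤ c} := by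
  refine Metric.isCompact_of_isClosed_isBounded
    (hg.preimage_isClosed_of_isClosed hX isClosed_Iic) ?_
  obtain ⟨R, hR⟩ := eventually_atTop.1 (hα.eventually_gt_atTop c)
  refine isBounded_iff_forall_norm_le.2 ⟨R, fun x hx => ?_⟩
  by_contra! h
  exact (hR ‖x‖ h.le).not_ge ((hlow x hx.1).trans hx.2)

/-- `W` itself may be non-measurable; only null-measurability of the property is needed. -/
lemma ae_of_forall_mem_of_measure_one {Ω : Type*} [MeasurableSpace Ω] {μ : Measure Ω}
    [IsProbabilityMeasure μ] {W : Set Ω} (hW : μ W = 1) {p : Ω → Prop}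
    (hp : NullMeasurableSet {w | p w} μ) (h : ∀ w ∈ W, p w) : ∀ᵐ w ∂μ, p w :=
  (prob_compl_eq_zero_iff₀ hp).2 (le_antisymm prob_le_one (hW ▸ measure_mono h))

lemma IsKFun.integrable_comp_norm {E : Type*} [NormedAddCommGroup E] [MeasurableSpace E]
    [BorelSpace E] [SecondCountableTopology E] {μ : Measure E} [IsProbabilityMeasure μ] {W : Set E}
    (hWb : IsBounded W) (hW : μ W = 1) {σ : ℝ → ℝ} (hσ : IsKFun σ) :
    Integrable (fun w => σ ‖w‖) μ := by
  obtain ⟨R, hR⟩ := isBounded_iff_forall_norm_le.1 hWb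
  have hae : ∀ᵐ w ∂μ, ‖w‖ ≤ R := ae_of_forall_mem_of_measure_one hW
    (measurableSet_le measurable_norm measurable_const).nullMeasurableSet hR
  refine Integrable.of_bound hσ.continuous_comp_norm.aestronglyMeasurable (σ R) ?_
  filter_upwards [hae] with w hw
  rw [Real.norm_of_nonneg (hσ.nonneg (norm_nonneg w))]
  exact hσ.2.1.monotoneOn (norm_nonneg w) ((norm_nonneg w).trans hw) hw

/-- Proposition 1(ii): rescaling an ISS-Lyapunov function yields a geometric drift condition
`ΔṼ(x) ≤ −1 + b·1_C(x)` with compact `C` and compact sublevel sets. -/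
theorem statement7 {nx nw : ℕ}
    (X : Set (EuclideanSpace ℝ (Fin nx))) (hXc : IsClosed X)
    (W : Set (EuclideanSpace ℝ (Fin nw))) (hWb : IsBounded W)
    (f : EuclideanSpace ℝ (Fin nx) → EuclideanSpace ℝ (Fin nw) → EuclideanSpace ℝ (Fin nx))
    (hmaps : ∀ x ∈ X, ∀ w ∈ W, f x w ∈ X)
    (μ : Measure (EuclideanSpace ℝ (Fin nw))) [IsProbabilityMeasure μ] (hμW : μ W = 1)
    (V : EuclideanSpace ℝ (Fin nx) → ℝ)
    (hVc : ContinuousOn V X) (hVnn : ∀ x ∈ X, 0 ≤ V x)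
    (α₁ α₃ σ : ℝ → ℝ) (hα₁ : IsKInfFun α₁) (hα₃ : IsKInfFun α₃) (hσ : IsKFun σ)
    (hlow : ∀ x ∈ X, α₁ ‖x‖ ≤ V x)
    (hint : ∀ x ∈ X, Integrable (fun w => V (f x w)) μ)
    (hdec : ∀ x ∈ X, ∀ w ∈ W, V (f x w) - V x ≤ -α₃ ‖x‖ + σ ‖w‖)
    (d d' : ℝ) (hd : ∫ w, σ ‖w‖ ∂μ ≤ d) (hdd' : d < d')
    (Vt : EuclideanSpace ℝ (Fin nx) → ℝ) (hVt : ∀ x, Vt x = V x / (d' - d))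
    (C : Set (EuclideanSpace ℝ (Fin nx))) (hC : C = {x ∈ X | α₃ ‖x‖ ≤ d'})
    (b : ℝ) (hb : b = 1 + d / (d' - d)) :
    IsCompact C ∧
    (∀ c : ℝ, IsCompact {x ∈ X | Vt x ≤ c}) ∧
    (∀ x ∈ X, ∫ w, Vt (f x w) ∂μ - Vt x ≤ -1 + b * C.indicator (fun _ => (1:ℝ)) x) := by
  have hpos : 0 < d' - d := sub_pos.2 hdd'
  refine ⟨?_, fun c => ?_, fun x hx => ?_⟩
  · rw [hC]
    exact isCompact_sublevel hXc hα₃.1.continuous_comp_norm.continuousOn hα₃.2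
      (fun _ _ => le_rfl) d'
  · simp only [hVt, div_le_iff₀ hpos]
    exact isCompact_sublevel hXc hVc hα₁.2 hlow _
  · have hσi : Integrable (fun w => σ ‖w‖) μ := hσ.integrable_comp_norm hWb hμW
    have hae : ∀ᵐ w ∂μ, V (f x w) ≤ (V x - α₃ ‖x‖) + σ ‖w‖ := by
      refine ae_of_forall_mem_of_measure_one hμW ?_ fun w hw => by linarith [hdec x hx w hw]
      exact nullMeasurableSet_le (hint x hx).aemeasurable
        ((integrable_const _).add hσi).aemeasurable
    have hdrift : ∫ w, V (f x w) ∂μ - V x ≤ -α₃ ‖x‖ + d := by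
      have h := integral_mono_ae (hint x hx) ((integrable_const (V x - α₃ ‖x‖)).add hσi) hae
      simp only [Pi.add_apply] at h
      rw [integral_add (integrable_const _) hσi, integral_const] at h
      simp only [probReal_univ, one_smul] at h
      linarith
    simp only [hVt]
    rw [integral_div, ← sub_div, div_le_iff₀ hpos]
    have hbd : b * (d' - d) = d' := by rw [hb]; field_simp; ring
    by_cases hxC : x ∈ C
    · rw [Set.indicator_of_mem hxC]
      linarith [hα₃.1.nonneg (norm_nonneg x)]
    · rw [Set.indicator_of_notMem hxC]
      have : d' < α₃ ‖x‖ := by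
        by_contra! h
        exact hxC (hC ▸ ⟨hx, h⟩)
      linarith
end

section
/- Suppose X ⊆ ℝ^{n_x} is robustly invariant for the system x_{k+1} = f(x_k, w_k), and suppose there exist a KL-function β and a K-function γ such that every trajectory with x_0 ∈ X and w_t ∈ W for all t satisfies ‖x_k‖ ≤ β(‖x_0‖, k) + γ(sup{‖w_t‖ : 0 ≤ t ≤ k−1}) for all k ≥ 1. Then for every trajectory (x_k) with x_0 ∈ X and w_t ∈ W for all t such that ‖w_k‖ → 0 as k → ∞, the state converges to the origin: ‖x_k‖ → 0 as k → ∞. -/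
/-!
The dynamics are time invariant and `X` is robustly invariant, so the stability estimate may be
applied to the trajectory restarted at any time `N`. Choose `N` so late that all later
disturbances have gain below `ε / 2`. With `N` fixed, `β ‖x N‖ k` falls below `ε / 2` as `k → ∞`.
Since `N` does not vary with `k`, no uniform bound on the trajectory is needed.
-/

open Filter Topology MeasureTheory Bornology

/-- ISS implies that trajectories converge to the origin whenever the disturbance converges
to zero. -/
theorem statement14 {nx nw : ℕ}
    (f : EuclideanSpace ℝ (Fin nx) → EuclideanSpace ℝ (Fin nw) → EuclideanSpace ℝ (Fin nx))
    (X : Set (EuclideanSpace ℝ (Fin nx))) (W : Set (EuclideanSpace ℝ (Fin nw)))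
    (hinv : ∀ x ∈ X, ∀ w ∈ W, f x w ∈ X)
    (β : ℝ → ℝ → ℝ) (γ : ℝ → ℝ) (hβ : IsKLFun β) (hγ : IsKFun γ)
    (hiss : ∀ (x : ℕ → EuclideanSpace ℝ (Fin nx)) (w : ℕ → EuclideanSpace ℝ (Fin nw)),
      x 0 ∈ X → (∀ t, w t ∈ W) → (∀ k, x (k+1) = f (x k) (w k)) →
      ∀ k, 1 ≤ k → ‖x k‖ ≤ β ‖x 0‖ (k : ℝ) + γ (⨆ t : Fin k, ‖w (t : ℕ)‖)) :
    ∀ (x : ℕ → EuclideanSpace ℝ (Fin nx)) (w : ℕ → EuclideanSpace ℝ (Fin nw)),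
      x 0 ∈ X → (∀ t, w t ∈ W) → (∀ k, x (k+1) = f (x k) (w k)) →
      Tendsto (fun k => ‖w k‖) atTop (𝓝 0) →
      Tendsto (fun k => ‖x k‖) atTop (𝓝 0) := by
  intro x w hx0 hw hx hlim
  have hxX : ∀ k, x k ∈ X := by
    intro k
    induction k with
    | zero => exact hx0
    | succ k ih => rw [hx]; exact hinv _ ih _ (hw k)
  obtain ⟨hγc, hγm, hγ0⟩ := hγ
  rw [Metric.tendsto_atTop]
  intro ε hε
  -- Continuity of `γ` at `0` gives a disturbance level `δ / 2` whose gain is below `ε / 2`.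
  obtain ⟨δ, hδ, hγδ⟩ := Metric.continuousWithinAt_iff.1
    (hγc 0 Set.self_mem_Ici) (ε / 2) (half_pos hε)
  have hγhalf : γ (δ / 2) < ε / 2 := by
    have h := @hγδ (δ / 2) (Set.mem_Ici.2 (half_pos hδ).le)
      (by rw [Real.dist_eq, sub_zero, abs_of_pos (half_pos hδ)]; linarith)
    rw [hγ0, Real.dist_eq, sub_zero] at h
    exact (abs_lt.1 h).2
  obtain ⟨N, hN⟩ := eventually_atTop.1 (hlim.eventually (gt_mem_nhds (half_pos hδ)))
  have hβlim : Tendsto (fun k : ℕ => β ‖x N‖ (k : ℝ)) atTop (𝓝 0) :=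
    (hβ.2 _ (Set.mem_Ici.2 (norm_nonneg _))).2.comp tendsto_natCast_atTop_atTop
  obtain ⟨M, hM⟩ := eventually_atTop.1 (hβlim.eventually (gt_mem_nhds (half_pos hε)))
  refine ⟨N + (M + 1), fun n hn => ?_⟩
  obtain ⟨k, rfl⟩ := Nat.exists_eq_add_of_le (show N ≤ n by omega)
  -- The trajectory restarted at time `N` satisfies the same stability estimate.
  have h := hiss (fun j => x (N + j)) (fun j => w (N + j)) (hxX N) (fun t => hw _)
    (fun j => hx (N + j)) k (by omega)
  have hsup : (⨆ t : Fin k, ‖w (N + (t : ℕ))‖) ≤ δ / 2 :=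
    Real.iSup_le (fun t => (hN _ (Nat.le_add_right _ _)).le) (half_pos hδ).le
  have hγle := hγm.monotoneOn
    (Set.mem_Ici.2 (Real.iSup_nonneg fun t : Fin k => norm_nonneg (w (N + (t : ℕ)))))
    (Set.mem_Ici.2 (half_pos hδ).le) hsup
  have hβk := hM k (by omega)
  simp only [add_zero] at h
  rw [Real.dist_eq, sub_zero, abs_of_nonneg (norm_nonneg _)]
  linarith
end

section
/- Let X ⊆ ℝ^n be a compact set containing the origin, and let V : X → ℝ be continuous with V(0) = 0 and V(x) > 0 for all x ∈ X with x ≠ 0. Then there exist K∞-functions α1 and α2 such that α1(‖x‖) ≤ V(x) ≤ α2(‖x‖) for all x ∈ X. -/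
/-!
The lower bound is a penalised infimum and the upper bound a damped supremum of `V`.

* `σ s = inf_{x ∈ X} (V x + max (s - ‖x‖) 0)` is continuous, nondecreasing, vanishes at `0`, is
  positive for `s > 0` (the infimum over the compact set `X` is attained), is at least `s - R` when
  `X` lies in the ball of radius `R`, and satisfies `σ ‖x‖ ≤ V x`. Multiplication by `s / (1 + s)`
  makes it strictly increasing and keeps it unbounded and below `V`.
* `τ s = sup_{x ∈ X} V x * min 1 (|s| / ‖x‖)` is continuous, nondecreasing on `[0, ∞)`, vanishes
  at `0`, and satisfies `V x ≤ τ ‖x‖`. Adding `s` makes it a K∞-function.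

Continuity of `σ` and `τ` comes from continuity of the optimal value of a jointly continuous
function over a compact set.
-/

open Filter Topology Bornology

/-- The lower bound, over an abstract compact space carrying a continuous "norm" `N ≥ 0` that
vanishes wherever `V` does; `z` only witnesses that the space is nonempty. -/
theorem exists_lower {Y : Type*} [TopologicalSpace Y] [CompactSpace Y] (N V : Y → ℝ)
    (hN : Continuous N) (hV : Continuous V) (hN0 : ∀ y, 0 ≤ N y) (hV0 : ∀ y, 0 ≤ V y)
    (hNV : ∀ y, V y = 0 → N y = 0) (z : Y) :
    ∃ α : ℝ → ℝ, IsKInfFun α ∧ ∀ y, α (N y) ≤ V y := by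
  have hK : IsCompact (Set.univ : Set Y) := isCompact_univ
  set f : ℝ → Y → ℝ := fun s y => V y + max (s - N y) 0 with hf
  set σ : ℝ → ℝ := fun s => sInf (f s '' Set.univ) with hσ
  have hσc : Continuous σ := by
    apply hK.continuous_sInf
    simp only [hf, Function.HasUncurry.uncurry, id]
    fun_prop
  have hfs : ∀ s, Continuous (f s) := fun s => by simp only [hf]; fun_prop
  have hle : ∀ s y, σ s ≤ f s y := fun s y =>
    csInf_le (hK.image (hfs s)).bddBelow ⟨y, trivial, rfl⟩
  have hatt : ∀ s, ∃ y, σ s = f s y := fun s => by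
    obtain ⟨y, -, hy⟩ := (hK.image (hfs s)).sInf_mem ⟨_, z, trivial, rfl⟩
    exact ⟨y, hy.symm⟩
  have hmono : Monotone σ := fun s t hst => by
    obtain ⟨y, hy⟩ := hatt t
    rw [hy]
    refine (hle s y).trans ?_
    simp only [hf]
    gcongr
  have hnn : ∀ s, 0 ≤ σ s := fun s => by
    obtain ⟨y, hy⟩ := hatt s
    rw [hy]
    exact add_nonneg (hV0 y) (le_max_right _ _)
  have hpos : ∀ s, 0 < s → 0 < σ s := fun s hs => by
    obtain ⟨y, hy⟩ := hatt s
    rw [hy]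
    simp only [hf]
    rcases (hV0 y).eq_or_lt with h | h
    · have := hNV y h.symm
      rw [this, ← h]
      simpa using hs
    · have := le_max_right (s - N y) 0
      linarith
  obtain ⟨R, hR⟩ := (hK.image hN).bddAbove
  have hgrow : ∀ s, s - R ≤ σ s := fun s => by
    obtain ⟨y, hy⟩ := hatt s
    rw [hy]
    have h1 : N y ≤ R := hR ⟨y, trivial, rfl⟩
    have h2 := le_max_left (s - N y) 0
    have h3 := hV0 y
    simp only [hf]
    linarith
  refine ⟨fun s => σ s * (s / (1 + s)), ⟨⟨?_, ?_, ?_⟩, ?_⟩, ?_⟩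
  · refine hσc.continuousOn.mul (continuousOn_id.div (by fun_prop) ?_)
    intro s hs
    have : (0 : ℝ) ≤ s := hs
    positivity
  · intro s hs t _ hst
    have hs : (0 : ℝ) ≤ s := hs
    have ht : 0 < t := hs.trans_lt hst
    have h1 : s / (1 + s) < t / (1 + t) := by
      rw [div_lt_div_iff₀ (by positivity) (by positivity)]
      nlinarith
    have h2 : 0 ≤ s / (1 + s) := by positivity
    have h3 := hmono hst.le
    have h4 := hpos t ht
    calc σ s * (s / (1 + s)) ≤ σ t * (s / (1 + s)) := by gcongr
      _ < σ t * (t / (1 + t)) := by gcongr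
  · simp
  · -- For `s ≥ 1` the factor `s / (1 + s)` is at least `1 / 2`.
    have h : Tendsto (fun s : ℝ => (s + -R) * (1 / 2)) atTop atTop :=
      (tendsto_atTop_add_const_right _ _ tendsto_id).atTop_mul_const (by norm_num)
    refine tendsto_atTop_mono' _ ?_ h
    filter_upwards [eventually_ge_atTop (1 : ℝ)] with s hs
    have h1 : (1 : ℝ) / 2 ≤ s / (1 + s) := by
      rw [div_le_div_iff₀ (by norm_num) (by linarith)]
      linarith
    calc (s + -R) * (1 / 2) ≤ σ s * (1 / 2) := by
          have := hgrow s
          gcongr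
          linarith
      _ ≤ σ s * (s / (1 + s)) := mul_le_mul_of_nonneg_left h1 (hnn s)
  · intro y
    have h1 : N y / (1 + N y) ≤ 1 := by
      have := hN0 y
      rw [div_le_one (by positivity)]
      linarith
    calc σ (N y) * (N y / (1 + N y)) ≤ σ (N y) := mul_le_of_le_one_right (hnn _) h1
      _ ≤ f (N y) y := hle _ _
      _ = V y := by simp [hf]

/-- The upper bound, over an abstract compact space carrying a continuous "norm" `N ≥ 0` whose
zeros are zeros of `V`; `z` only witnesses that the space is nonempty. -/
theorem exists_upper {Y : Type*} [TopologicalSpace Y] [CompactSpace Y] (N V : Y → ℝ)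
    (hN : Continuous N) (hV : Continuous V) (hN0 : ∀ y, 0 ≤ N y) (hV0 : ∀ y, 0 ≤ V y)
    (hNV : ∀ y, N y = 0 → V y = 0) (z : Y) :
    ∃ α : ℝ → ℝ, IsKInfFun α ∧ ∀ y, V y ≤ α (N y) := by
  have hK : IsCompact (Set.univ : Set Y) := isCompact_univ
  set f : ℝ → Y → ℝ := fun s y => V y * min 1 (|s| / N y) with hf
  have hmin0 : ∀ s y, 0 ≤ min 1 (|s| / N y) := fun s y =>
    le_min zero_le_one (div_nonneg (abs_nonneg _) (hN0 y))
  have hfc : Continuous (fun p : ℝ × Y => f p.1 p.2) := by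
    rw [continuous_iff_continuousAt]
    rintro ⟨s, y⟩
    by_cases hy : N y = 0
    · -- At a zero of `N` the damping factor is discontinuous but bounded, and `V` tends to `0`.
      have hfy : f s y = 0 := by simp [hf, hNV y hy]
      rw [ContinuousAt, hfy]
      have hV' : Tendsto (fun p : ℝ × Y => V p.2) (𝓝 (s, y)) (𝓝 0) := by
        have : Continuous (fun p : ℝ × Y => V p.2) := by fun_prop
        simpa [hNV y hy] using this.tendsto (s, y)
      exact squeeze_zero (fun p => mul_nonneg (hV0 _) (hmin0 _ _))
        (fun p => mul_le_of_le_one_right (hV0 _) (min_le_left _ _)) hV'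
    · have h1 : ContinuousAt (fun p : ℝ × Y => |p.1| / N p.2) (s, y) :=
        ContinuousAt.div (by fun_prop) (by fun_prop) hy
      have h2 : ContinuousAt (fun p : ℝ × Y => V p.2) (s, y) := by fun_prop
      exact h2.mul (continuousAt_const.min h1)
  set τ : ℝ → ℝ := fun s => sSup (f s '' Set.univ) with hτ
  have hτc : Continuous τ := hK.continuous_sSup hfc
  have hfs : ∀ s, Continuous (f s) := fun s => hfc.comp (Continuous.prodMk_right s)
  have hle : ∀ s y, f s y ≤ τ s := fun s y =>
    le_csSup (hK.image (hfs s)).bddAbove ⟨y, trivial, rfl⟩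
  have hatt : ∀ s, ∃ y, τ s = f s y := fun s => by
    obtain ⟨y, -, hy⟩ := (hK.image (hfs s)).sSup_mem ⟨_, z, trivial, rfl⟩
    exact ⟨y, hy.symm⟩
  have hmono : ∀ s t, 0 ≤ s → s ≤ t → τ s ≤ τ t := fun s t hs hst => by
    obtain ⟨y, hy⟩ := hatt s
    rw [hy]
    refine le_trans ?_ (hle t y)
    refine mul_le_mul_of_nonneg_left (min_le_min_left _ ?_) (hV0 y)
    refine div_le_div_of_nonneg_right ?_ (hN0 y)
    rwa [abs_of_nonneg hs, abs_of_nonneg (hs.trans hst)]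
  have hnn : ∀ s, 0 ≤ τ s := fun s =>
    (mul_nonneg (hV0 z) (hmin0 s z)).trans (hle s z)
  refine ⟨fun s => τ s + s, ⟨⟨?_, ?_, ?_⟩, ?_⟩, ?_⟩
  · exact (hτc.add continuous_id).continuousOn
  · intro s hs t _ hst
    exact add_lt_add_of_le_of_lt (hmono s t hs hst.le) hst
  · obtain ⟨y, hy⟩ := hatt 0
    simp only [hy, hf]
    simp
  · exact tendsto_atTop_mono (fun s => le_add_of_nonneg_left (hnn s)) tendsto_id
  · intro y
    have h : V y ≤ f (N y) y := by
      by_cases hy : N y = 0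
      · simp [hf, hNV y hy]
      · simp [hf, abs_of_nonneg (hN0 y), div_self hy]
    have := hle (N y) y
    have := hN0 y
    show V y ≤ τ (N y) + N y
    linarith

/-- A continuous positive definite function on a compact set admits K∞ lower and upper
bounds. -/
theorem statement15 {n : ℕ}
    (X : Set (EuclideanSpace ℝ (Fin n))) (hXc : IsCompact X)
    (h0X : (0 : EuclideanSpace ℝ (Fin n)) ∈ X)
    (V : EuclideanSpace ℝ (Fin n) → ℝ) (hVc : ContinuousOn V X)
    (hV0 : V 0 = 0) (hVpos : ∀ x ∈ X, x ≠ 0 → 0 < V x) :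
    ∃ α₁ α₂ : ℝ → ℝ, IsKInfFun α₁ ∧ IsKInfFun α₂ ∧
      ∀ x ∈ X, α₁ ‖x‖ ≤ V x ∧ V x ≤ α₂ ‖x‖ := by
  have : CompactSpace X := isCompact_iff_compactSpace.mp hXc
  have hN : Continuous (fun x : X => ‖(x : EuclideanSpace ℝ (Fin n))‖) := by fun_prop
  have hV : Continuous (fun x : X => V x) := hVc.domRestrict
  have hnn : ∀ x : X, 0 ≤ V x := fun x => by
    by_cases hx : (x : EuclideanSpace ℝ (Fin n)) = 0
    · rw [hx, hV0]
    · exact (hVpos x x.2 hx).le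
  obtain ⟨α₁, h1, h1'⟩ := exists_lower _ _ hN hV (fun _ => norm_nonneg _) hnn
    (fun x hx => by
      by_contra h
      exact (hVpos x x.2 (norm_ne_zero_iff.mp h)).ne' hx) ⟨0, h0X⟩
  obtain ⟨α₂, h2, h2'⟩ := exists_upper _ _ hN hV (fun _ => norm_nonneg _) hnn
    (fun x hx => by rw [norm_eq_zero.mp hx, hV0]) ⟨0, h0X⟩
  exact ⟨α₁, α₂, h1, h2, fun x hx => ⟨h1' ⟨x, hx⟩, h2' ⟨x, hx⟩⟩⟩
end

section
/- Let P_x be an n×n symmetric positive definite real matrix, P_c an m×m symmetric positive definite real matrix, G a q×m real matrix, H a q×n real matrix and h ∈ ℝ^q. Define the domain D = {x ∈ ℝ^n : there exists c ∈ ℝ^m with G c ≤ h + H x componentwise} and, for x ∈ D, the optimal value function V(x) = xᵀ P_x x + inf{cᵀ P_c c : c ∈ ℝ^m, G c ≤ h + H x}. Then D is convex, the infimum defining V(x) is attained for every x ∈ D, V is strictly convex on D, and V is Lipschitz continuous on every bounded subset of D. -/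
/-!
Attainment and strict convexity are elementary: `c ↦ cᵀ P c` is continuous and coercive, and
for `a + b = 1` it satisfies `Q (a u + b v) = a Q u + b Q v - a b Q (u - v)`; convex combinations
of minimizers at `x` and `y` are feasible at the corresponding combination of `x` and `y`.

The Lipschitz bound rests on Hoffman's error bound (`hoffman_bound`): for a fixed matrix `G` there
is `K` such that any point violating a feasible system `G c ≤ b` by at most `δ` lies within `K δ`
of a solution. It is proved by induction on the number of variables, by Fourier–Motzkin elimination.
Hence feasible points at `x` can be moved to feasible points at `y` at a cost `O(‖x - y‖)`. This
bounds the minimizers over a bounded set `B` of parameters, and, as a quadratic form is Lipschitz on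
bounded sets, it yields `V y ≤ V x + L ‖x - y‖` on `B`.
-/

open Filter Topology Bornology Matrix

lemma exists_nonneg_bound {ι : Type} [Finite ι] (f : ι → ℝ) : ∃ M : ℝ, 0 ≤ M ∧ ∀ i, f i ≤ M := by
  obtain ⟨M, hM⟩ := (Set.finite_range f).bddAbove
  exact ⟨max M 0, le_max_right _ _, fun i => (hM ⟨i, rfl⟩).trans (le_max_left _ _)⟩

lemma abs_dotProduct_le {m : ℕ} (u v : Fin m → ℝ) : |u ⬝ᵥ v| ≤ m * ‖u‖ * ‖v‖ := by
  unfold dotProduct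
  calc |∑ i, u i * v i| ≤ ∑ i, |u i * v i| := Finset.abs_sum_le_sum_abs _ _
    _ ≤ ∑ _i : Fin m, ‖u‖ * ‖v‖ := by
        refine Finset.sum_le_sum fun i _ => ?_
        rw [abs_mul]
        exact mul_le_mul (norm_le_pi_norm u i) (norm_le_pi_norm v i) (abs_nonneg _) (norm_nonneg _)
    _ = m * ‖u‖ * ‖v‖ := by simp [mul_assoc]

lemma exists_mulVec_bound {p r : ℕ} (A : Matrix (Fin p) (Fin r) ℝ) :
    ∃ C : ℝ, 0 ≤ C ∧ ∀ v, ‖A.mulVec v‖ ≤ C * ‖v‖ :=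
  ⟨‖(Matrix.mulVecLin A).toContinuousLinearMap‖, norm_nonneg _, fun v =>
    (Matrix.mulVecLin A).toContinuousLinearMap.le_opNorm v⟩

/-- Hoffman's error bound. In the inductive step the variable `c 0` is eliminated: the rows of the
projected system are those with zero leading coefficient, and for each pair of rows with leading
coefficients of opposite sign the nonnegative combination cancelling `c 0`. -/
lemma hoffman_bound (m : ℕ) : ∀ (ι : Type) [Finite ι] (a : ι → Fin m → ℝ),
    ∃ K : ℝ, 0 ≤ K ∧ ∀ (b : ι → ℝ) (δ : ℝ) (c d : Fin m → ℝ), 0 ≤ δ →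
      (∀ i, a i ⬝ᵥ d ≤ b i) → (∀ i, a i ⬝ᵥ c ≤ b i + δ) →
      ∃ c' : Fin m → ℝ, (∀ i, a i ⬝ᵥ c' ≤ b i) ∧ ‖c' - c‖ ≤ K * δ := by
  induction m with
  | zero =>
    intro ι _ a
    refine ⟨0, le_rfl, fun b δ c d hδ hd hc => ⟨d, hd, ?_⟩⟩
    rw [Subsingleton.elim d c]; simp
  | succ m ih =>
    intro ι _ a
    have split : ∀ i (c : Fin (m + 1) → ℝ),
        a i ⬝ᵥ c = a i 0 * c 0 + vecTail (a i) ⬝ᵥ vecTail c := by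
      intro i c
      simp [dotProduct, Fin.sum_univ_succ, vecTail]
    obtain ⟨K, hK, ihK⟩ := ih ({i // a i 0 = 0} ⊕ ({i // 0 < a i 0} × {j // a j 0 < 0}))
      (Sum.elim (fun i => vecTail (a i))
        (fun p => (-a p.2 0) • vecTail (a p.1) + (a p.1 0) • vecTail (a p.2)))
    obtain ⟨M, hM, hgM⟩ := exists_nonneg_bound (fun i => |a i 0|)
    obtain ⟨N, hN, hgN⟩ := exists_nonneg_bound (fun i => |a i 0|⁻¹)
    obtain ⟨A, hA, haA⟩ := exists_nonneg_bound (fun i => m * ‖vecTail (a i)‖)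
    -- The violation of the projected system is at most `W * δ`.
    set W := 2 * M + 1 with hW
    have hW0 : 0 ≤ W := by positivity
    set R := (1 + A * (K * W)) * N with hR
    have hR0 : 0 ≤ R := by positivity
    refine ⟨max (K * W) R, by positivity, fun b δ c d hδ hd hc => ?_⟩
    obtain ⟨e, he, hec⟩ := ihK
      (Sum.elim (fun i => b i) (fun p => (-a p.2 0) * b p.1 + (a p.1 0) * b p.2))
      (W * δ) (vecTail c) (vecTail d) (by positivity)
      (by
        rintro (⟨i, hi⟩ | ⟨⟨i, hi⟩, ⟨j, hj⟩⟩)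
        · have := hd i
          rw [split, hi] at this
          simpa using this
        · have h1 := hd i
          have h2 := hd j
          rw [split] at h1 h2
          simp only [Sum.elim_inr, add_dotProduct, smul_dotProduct, smul_eq_mul]
          have h3 := mul_le_mul_of_nonneg_left h1 (neg_pos.2 hj).le
          have h4 := mul_le_mul_of_nonneg_left h2 hi.le
          linarith)
      (by
        have hWδ : δ ≤ W * δ := by nlinarith [mul_nonneg hM hδ]
        rintro (⟨i, hi⟩ | ⟨⟨i, hi⟩, ⟨j, hj⟩⟩)
        · have := hc i
          rw [split, hi] at this
          simp only [Sum.elim_inl]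
          linarith
        · have h1 := hc i
          have h2 := hc j
          rw [split] at h1 h2
          simp only [Sum.elim_inr, add_dotProduct, smul_dotProduct, smul_eq_mul]
          have h3 := mul_le_mul_of_nonneg_left h1 (neg_pos.2 hj).le
          have h4 := mul_le_mul_of_nonneg_left h2 hi.le
          have h5 : a i 0 ≤ M := (le_abs_self _).trans (hgM i)
          have h6 : -a j 0 ≤ M := (neg_le_abs _).trans (hgM j)
          have h7 : (a i 0 + -a j 0) * δ ≤ W * δ := by gcongr; linarith
          linarith)
    -- Violation of row `i` at `(c 0, e)`.
    have key : ∀ i, a i 0 * c 0 ≤ b i - vecTail (a i) ⬝ᵥ e + (1 + A * (K * W)) * δ := by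
      intro i
      have h1 := hc i
      rw [split] at h1
      have h2 : vecTail (a i) ⬝ᵥ e - vecTail (a i) ⬝ᵥ vecTail c ≤ A * (K * (W * δ)) := by
        rw [← dotProduct_sub]
        refine (le_abs_self _).trans ((abs_dotProduct_le _ _).trans ?_)
        exact mul_le_mul (haA i) hec (norm_nonneg _) hA
      linarith
    -- The admissible values of the eliminated variable lie between `lo` and `up`; both sets also
    -- contain an endpoint of the interval of radius `R * δ` around `c 0`.
    let lo : Option {j // a j 0 < 0} → ℝ := fun o =>
      o.elim (c 0 - R * δ) (fun j => (b j - vecTail (a j) ⬝ᵥ e) / a j 0)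
    let up : Option {i // 0 < a i 0} → ℝ := fun o =>
      o.elim (c 0 + R * δ) (fun i => (b i - vecTail (a i) ⬝ᵥ e) / a i 0)
    have hRδ : 0 ≤ R * δ := by positivity
    have hE : 0 ≤ (1 + A * (K * W)) * δ := by positivity
    have hlu : ∀ x ∈ Set.range lo, ∀ y ∈ Set.range up, x ≤ y := by
      rintro _ ⟨o, rfl⟩ _ ⟨o', rfl⟩
      rcases o with _ | ⟨j, hj⟩ <;> rcases o' with _ | ⟨i, hi⟩ <;>
        simp only [lo, up, Option.elim]
      · linarith
      · have h1 := key i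
        have h2 := hgN i
        simp only [abs_of_pos hi] at h2
        rw [le_div_iff₀ hi]
        have h3 : 1 ≤ N * a i 0 := by
          have := mul_le_mul_of_nonneg_right h2 hi.le
          rwa [inv_mul_cancel₀ hi.ne'] at this
        have h4 := mul_le_mul_of_nonneg_left h3 hE
        rw [hR]; linarith
      · have h1 := key j
        have h2 := hgN j
        simp only [abs_of_neg hj] at h2
        have hj' := neg_pos.2 hj
        rw [div_le_iff_of_neg hj]
        have h3 : 1 ≤ N * -a j 0 := by
          have := mul_le_mul_of_nonneg_right h2 hj'.le
          rwa [inv_mul_cancel₀ hj'.ne'] at this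
        have h4 := mul_le_mul_of_nonneg_left h3 hE
        rw [hR]; linarith
      · have h1 := he (Sum.inr (⟨i, hi⟩, ⟨j, hj⟩))
        simp only [Sum.elim_inr, add_dotProduct, smul_dotProduct, smul_eq_mul] at h1
        rw [div_le_iff_of_neg hj, div_mul_eq_mul_div, div_le_iff₀ hi]
        linarith
    obtain ⟨t, htl, htu⟩ := exists_between_of_forall_le
      (Set.range_nonempty lo) (Set.range_nonempty up) hlu
    refine ⟨Fin.cons t e, fun i => ?_, ?_⟩
    · have hs : a i ⬝ᵥ (Fin.cons t e : Fin (m + 1) → ℝ) = a i 0 * t + vecTail (a i) ⬝ᵥ e := by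
        rw [split]; rfl
      rw [hs]
      rcases lt_trichotomy (a i 0) 0 with hi | hi | hi
      · have h1 : (b i - vecTail (a i) ⬝ᵥ e) / a i 0 ≤ t := htl ⟨some ⟨i, hi⟩, rfl⟩
        rw [div_le_iff_of_neg hi] at h1
        linarith
      · have h1 := he (Sum.inl ⟨i, hi⟩)
        simp only [Sum.elim_inl] at h1
        rw [hi]; linarith
      · have h1 : t ≤ (b i - vecTail (a i) ⬝ᵥ e) / a i 0 := htu ⟨some ⟨i, hi⟩, rfl⟩
        rw [le_div_iff₀ hi] at h1
        linarith
    · refine (pi_norm_le_iff_of_nonneg (by positivity)).2 fun j => ?_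
      refine Fin.cases ?_ (fun j => ?_) j
      · have h1 : c 0 - R * δ ≤ t := htl ⟨none, rfl⟩
        have h2 : t ≤ c 0 + R * δ := htu ⟨none, rfl⟩
        have h3 : R * δ ≤ max (K * W) R * δ := by gcongr; exact le_max_right _ _
        simp only [Pi.sub_apply, Fin.cons_zero, Real.norm_eq_abs]
        rw [abs_le]
        constructor <;> linarith
      · have h1 := (norm_le_pi_norm (e - vecTail c) j).trans hec
        have h3 : K * W * δ ≤ max (K * W) R * δ := by gcongr; exact le_max_left _ _
        have h4 : ((Fin.cons t e : Fin (m + 1) → ℝ) - c) j.succ = (e - vecTail c) j := rfl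
        rw [h4]; linarith

lemma quad_convex_comb {n : ℕ} (P : Matrix (Fin n) (Fin n) ℝ) (x y : Fin n → ℝ) (a b : ℝ)
    (hab : a + b = 1) :
    (a • x + b • y) ⬝ᵥ P.mulVec (a • x + b • y) =
      a * (x ⬝ᵥ P.mulVec x) + b * (y ⬝ᵥ P.mulVec y)
        - a * b * ((x - y) ⬝ᵥ P.mulVec (x - y)) := by
  obtain rfl : b = 1 - a := by linarith
  simp only [mulVec_add, mulVec_smul, mulVec_sub, dotProduct_add, add_dotProduct, dotProduct_sub,
    sub_dotProduct, smul_dotProduct, dotProduct_smul, smul_eq_mul]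
  ring

lemma quad_pos {n : ℕ} {P : Matrix (Fin n) (Fin n) ℝ} (hP : P.PosDef) {x : Fin n → ℝ}
    (hx : x ≠ 0) : 0 < x ⬝ᵥ P.mulVec x := by
  simpa using hP.dotProduct_mulVec_pos hx

lemma quad_nonneg {n : ℕ} {P : Matrix (Fin n) (Fin n) ℝ} (hP : P.PosDef) (x : Fin n → ℝ) :
    0 ≤ x ⬝ᵥ P.mulVec x := by
  simpa using hP.posSemidef.dotProduct_mulVec_nonneg x

lemma quad_continuous {n : ℕ} (P : Matrix (Fin n) (Fin n) ℝ) :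
    Continuous fun x : Fin n → ℝ => x ⬝ᵥ P.mulVec x := by
  fun_prop

/-- Coercivity, from the minimum of the form over the unit sphere. -/
lemma quad_coercive {n : ℕ} {P : Matrix (Fin n) (Fin n) ℝ} (hP : P.PosDef) :
    ∃ μ : ℝ, 0 < μ ∧ ∀ x : Fin n → ℝ, μ * ‖x‖ ^ 2 ≤ x ⬝ᵥ P.mulVec x := by
  by_cases hne : (Metric.sphere (0 : Fin n → ℝ) 1).Nonempty
  · obtain ⟨u, hu, hmin⟩ := (isCompact_sphere (0 : Fin n → ℝ) 1).exists_isMinOn hne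
      (quad_continuous P).continuousOn
    have hu0 : u ≠ 0 := by
      rintro rfl
      simp at hu
    refine ⟨_, quad_pos hP hu0, fun x => ?_⟩
    by_cases hx : x = 0
    · simp [hx]
    · have hx' : 0 < ‖x‖ := norm_pos_iff.2 hx
      have h1 : u ⬝ᵥ P.mulVec u ≤ (‖x‖⁻¹ • x) ⬝ᵥ P.mulVec (‖x‖⁻¹ • x) :=
        hmin (by simp [norm_smul, hx'.ne'])
      have h2 : (‖x‖⁻¹ • x) ⬝ᵥ P.mulVec (‖x‖⁻¹ • x) = (x ⬝ᵥ P.mulVec x) / ‖x‖ ^ 2 := by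
        simp only [mulVec_smul, smul_dotProduct, dotProduct_smul, smul_eq_mul]
        field_simp
      rw [h2, le_div_iff₀ (by positivity)] at h1
      exact h1
  · refine ⟨1, one_pos, fun x => ?_⟩
    have hx : x = 0 := by
      by_contra hx
      exact hne ⟨‖x‖⁻¹ • x, by simp [norm_smul, norm_ne_zero_iff.2 hx]⟩
    simp [hx]

lemma quad_sub_le {n : ℕ} (P : Matrix (Fin n) (Fin n) ℝ) :
    ∃ C : ℝ, 0 ≤ C ∧ ∀ u v : Fin n → ℝ,
      u ⬝ᵥ P.mulVec u - v ⬝ᵥ P.mulVec v ≤ C * (‖u‖ + ‖v‖) * ‖u - v‖ := by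
  obtain ⟨C, hC, hb⟩ := exists_mulVec_bound P
  refine ⟨n * C, by positivity, fun u v => ?_⟩
  have h0 : u ⬝ᵥ P.mulVec u - v ⬝ᵥ P.mulVec v =
      u ⬝ᵥ P.mulVec (u - v) + (u - v) ⬝ᵥ P.mulVec v := by
    simp only [mulVec_sub, dotProduct_sub, sub_dotProduct]; ring
  have hB : ∀ w z : Fin n → ℝ, w ⬝ᵥ P.mulVec z ≤ n * ‖w‖ * (C * ‖z‖) := fun w z =>
    (le_abs_self _).trans ((abs_dotProduct_le _ _).trans (by gcongr; exact hb z))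
  rw [h0]
  calc _ ≤ _ := add_le_add (hB _ _) (hB _ _)
    _ = _ := by ring

lemma exists_minimizer {m q : ℕ} {P : Matrix (Fin m) (Fin m) ℝ} (hP : P.PosDef)
    (G : Matrix (Fin q) (Fin m) ℝ) (b : Fin q → ℝ) (hne : ∃ c, G.mulVec c ≤ b) :
    ∃ c, G.mulVec c ≤ b ∧ ∀ d, G.mulVec d ≤ b → c ⬝ᵥ P.mulVec c ≤ d ⬝ᵥ P.mulVec d := by
  obtain ⟨c₀, hc₀⟩ := hne
  obtain ⟨μ, hμ, hco⟩ := quad_coercive hP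
  have hcl : IsClosed {c : Fin m → ℝ | G.mulVec c ≤ b} :=
    isClosed_le (by fun_prop) continuous_const
  have hev : ∀ᶠ x in cocompact (Fin m → ℝ) ⊓ 𝓟 {c : Fin m → ℝ | G.mulVec c ≤ b},
      c₀ ⬝ᵥ P.mulVec c₀ ≤ x ⬝ᵥ P.mulVec x := by
    refine Filter.Eventually.filter_mono inf_le_left ?_
    filter_upwards [(tendsto_norm_cocompact_atTop (E := Fin m → ℝ)).eventually_ge_atTop
      (1 + c₀ ⬝ᵥ P.mulVec c₀ / μ)] with x hx
    have h0 : 0 ≤ c₀ ⬝ᵥ P.mulVec c₀ / μ := div_nonneg (quad_nonneg hP _) hμ.le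
    have h1 : c₀ ⬝ᵥ P.mulVec c₀ / μ ≤ ‖x‖ ^ 2 := by nlinarith
    rw [div_le_iff₀ hμ] at h1
    linarith [hco x]
  obtain ⟨c, hc, hmin⟩ := (quad_continuous P).continuousOn.exists_isMinOn' hcl hc₀ hev
  exact ⟨c, hc, fun d hd => hmin hd⟩

/-- Proposition 3(iii): the value function of a strictly convex parametric QP is attained,
strictly convex and Lipschitz continuous on bounded subsets of its (convex) domain. -/
theorem statement16 {n m q : ℕ}
    (Px : Matrix (Fin n) (Fin n) ℝ) (Pc : Matrix (Fin m) (Fin m) ℝ)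
    (hPx : Px.PosDef) (hPc : Pc.PosDef)
    (G : Matrix (Fin q) (Fin m) ℝ) (H : Matrix (Fin q) (Fin n) ℝ) (h : Fin q → ℝ)
    (Dom : Set (Fin n → ℝ))
    (hDom : Dom = {x | ∃ c : Fin m → ℝ, G.mulVec c ≤ h + H.mulVec x})
    (V : (Fin n → ℝ) → ℝ)
    (hV : ∀ x, V x = x ⬝ᵥ Px.mulVec x +
      sInf {r : ℝ | ∃ c : Fin m → ℝ, G.mulVec c ≤ h + H.mulVec x ∧ r = c ⬝ᵥ Pc.mulVec c}) :
    Convex ℝ Dom ∧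
    (∀ x ∈ Dom, ∃ c : Fin m → ℝ, G.mulVec c ≤ h + H.mulVec x ∧
      V x = x ⬝ᵥ Px.mulVec x + c ⬝ᵥ Pc.mulVec c) ∧
    StrictConvexOn ℝ Dom V ∧
    (∀ B ⊆ Dom, IsBounded B → ∃ L : NNReal, LipschitzOnWith L V B) := by
  have hatt : ∀ x ∈ Dom, ∃ c : Fin m → ℝ, G.mulVec c ≤ h + H.mulVec x ∧
      V x = x ⬝ᵥ Px.mulVec x + c ⬝ᵥ Pc.mulVec c := by
    intro x hx
    rw [hDom] at hx
    obtain ⟨c, hc, hmin⟩ := exists_minimizer hPc G _ hx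
    refine ⟨c, hc, ?_⟩
    rw [hV]
    congr 1
    refine IsLeast.csInf_eq ⟨⟨c, hc, rfl⟩, ?_⟩
    rintro _ ⟨d, hd, rfl⟩
    exact hmin d hd
  have hle : ∀ x (c : Fin m → ℝ), G.mulVec c ≤ h + H.mulVec x →
      V x ≤ x ⬝ᵥ Px.mulVec x + c ⬝ᵥ Pc.mulVec c := by
    intro x c hc
    rw [hV]
    gcongr
    refine csInf_le ⟨0, ?_⟩ ⟨c, hc, rfl⟩
    rintro _ ⟨d, _, rfl⟩
    exact quad_nonneg hPc d
  have hcomb : ∀ (x y : Fin n → ℝ) (c d : Fin m → ℝ) (a b : ℝ), 0 ≤ a → 0 ≤ b → a + b = 1 →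
      G.mulVec c ≤ h + H.mulVec x → G.mulVec d ≤ h + H.mulVec y →
      G.mulVec (a • c + b • d) ≤ h + H.mulVec (a • x + b • y) := by
    intro x y c d a b ha hb hab hc hd i
    have h1 := mul_le_mul_of_nonneg_left (hc i) ha
    have h2 := mul_le_mul_of_nonneg_left (hd i) hb
    obtain rfl : b = 1 - a := by linarith
    simp only [mulVec_add, mulVec_smul, Pi.add_apply, Pi.smul_apply, smul_eq_mul] at h1 h2 ⊢
    linarith
  have hconv : Convex ℝ Dom := by
    intro x hx y hy a b ha hb hab
    rw [hDom] at hx hy ⊢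
    obtain ⟨c, hc⟩ := hx
    obtain ⟨d, hd⟩ := hy
    exact ⟨_, hcomb x y c d a b ha hb hab hc hd⟩
  refine ⟨hconv, hatt, ⟨hconv, ?_⟩, ?_⟩
  · intro x hx y hy hxy a b ha hb hab
    obtain ⟨c, hc, hVx⟩ := hatt x hx
    obtain ⟨d, hd, hVy⟩ := hatt y hy
    have h1 := hle _ _ (hcomb x y c d a b ha.le hb.le hab hc hd)
    rw [quad_convex_comb Px x y a b hab, quad_convex_comb Pc c d a b hab] at h1
    have h2 := mul_pos (mul_pos ha hb) (quad_pos hPx (sub_ne_zero.2 hxy))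
    have h3 := mul_nonneg (mul_pos ha hb).le (quad_nonneg hPc (c - d))
    rw [hVx, hVy, smul_eq_mul, smul_eq_mul]
    linarith
  · intro B hB hbd
    rcases B.eq_empty_or_nonempty with rfl | ⟨x₀, hx₀⟩
    · exact ⟨0, by simp⟩
    obtain ⟨K, hK, hoff⟩ := hoffman_bound m (Fin q) G
    obtain ⟨η, hη, hHη⟩ := exists_mulVec_bound H
    -- Feasible points can be moved between parameters at linear cost.
    have hmove : ∀ x ∈ Dom, ∀ y ∈ Dom, ∀ c, G.mulVec c ≤ h + H.mulVec x →
        ∃ c', G.mulVec c' ≤ h + H.mulVec y ∧ ‖c' - c‖ ≤ K * η * ‖x - y‖ := by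
      intro x _ y hy c hc
      rw [hDom] at hy
      obtain ⟨d, hd⟩ := hy
      obtain ⟨c', h1, h2⟩ := hoff (h + H.mulVec y) (η * ‖x - y‖) c d (by positivity) hd
        (fun i => by
          have h1 := hc i
          have h2 := (le_abs_self _).trans ((norm_le_pi_norm (H.mulVec (x - y)) i).trans (hHη _))
          simp only [mulVec_sub, Pi.sub_apply, Pi.add_apply] at h1 h2 ⊢
          change (G.mulVec c) i ≤ _
          linarith)
      exact ⟨c', h1, by rwa [mul_assoc]⟩
    obtain ⟨ρ, hρ⟩ := hbd.exists_norm_le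
    have hρ0 : 0 ≤ ρ := (norm_nonneg _).trans (hρ x₀ hx₀)
    have hdist : ∀ x ∈ B, ∀ y ∈ B, ‖x - y‖ ≤ 2 * ρ := fun x hx y hy =>
      (norm_sub_le _ _).trans (by linarith [hρ x hx, hρ y hy])
    obtain ⟨c₀, hc₀, -⟩ := hatt x₀ (hB hx₀)
    obtain ⟨μ, hμ, hco⟩ := quad_coercive hPc
    obtain ⟨C, hC, hqc⟩ := quad_sub_le Pc
    obtain ⟨C', hC', hqx⟩ := quad_sub_le Px
    set r := ‖c₀‖ + K * η * (2 * ρ) with hr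
    have hr0 : 0 ≤ r := by positivity
    set S := 1 + C * r * r / μ with hS
    have hS0 : 0 ≤ C * r * r / μ := by positivity
    -- A uniform bound for the minimizers over `B`.
    have hbound : ∀ x ∈ B, ∀ c : Fin m → ℝ, V x = x ⬝ᵥ Px.mulVec x + c ⬝ᵥ Pc.mulVec c →
        ‖c‖ ≤ S := by
      intro x hx c hVc
      obtain ⟨d, hd, hdc⟩ := hmove x₀ (hB hx₀) x (hB hx) c₀ hc₀
      have h1 : ‖d‖ ≤ r := by
        have h2 : ‖d‖ ≤ ‖c₀‖ + ‖d - c₀‖ := norm_le_norm_add_norm_sub' d c₀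
        have h3 : K * η * ‖x₀ - x‖ ≤ K * η * (2 * ρ) := by
          gcongr
          exact hdist x₀ hx₀ x hx
        linarith
      have h2 := hle x d hd
      have h3 := hqc d 0
      simp only [norm_zero, add_zero, sub_zero, zero_dotProduct] at h3
      have h4 : C * ‖d‖ * ‖d‖ ≤ C * r * r := by gcongr
      have h5 : ‖c‖ ^ 2 ≤ C * r * r / μ := by
        rw [le_div_iff₀ hμ]
        linarith [hco c]
      nlinarith [sq_nonneg (‖c‖ - 1)]
    have hL0 : 0 ≤ C' * (2 * ρ) + C * (2 * S + K * η * (2 * ρ)) * (K * η) := by positivity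
    refine ⟨⟨_, hL0⟩, LipschitzOnWith.of_le_add_mul _ fun y hy x hx => ?_⟩
    rw [dist_comm, dist_eq_norm]
    change V y ≤ V x + (C' * (2 * ρ) + C * (2 * S + K * η * (2 * ρ)) * (K * η)) * ‖x - y‖
    obtain ⟨c, hc, hVx⟩ := hatt x (hB hx)
    have hcS := hbound x hx c hVx
    obtain ⟨d, hd, hdc⟩ := hmove x (hB hx) y (hB hy) c hc
    have h1 := hle y d hd
    have hdS : ‖d‖ ≤ S + K * η * (2 * ρ) := by
      have h2 : ‖d‖ ≤ ‖c‖ + ‖d - c‖ := norm_le_norm_add_norm_sub' d c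
      have h3 : K * η * ‖x - y‖ ≤ K * η * (2 * ρ) := by
        gcongr
        exact hdist x hx y hy
      linarith
    have h2 : C' * (‖y‖ + ‖x‖) * ‖y - x‖ ≤ C' * (2 * ρ) * ‖x - y‖ := by
      rw [norm_sub_rev y x]
      gcongr
      linarith [hρ x hx, hρ y hy]
    have h3 : C * (‖d‖ + ‖c‖) * ‖d - c‖ ≤
        C * (2 * S + K * η * (2 * ρ)) * (K * η * ‖x - y‖) := by
      have h6 : ‖d‖ + ‖c‖ ≤ 2 * S + K * η * (2 * ρ) := by linarith
      exact mul_le_mul (mul_le_mul_of_nonneg_left h6 hC) hdc (norm_nonneg _) (by positivity)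
    have h4 := hqx y x
    have h5 := hqc d c
    rw [hVx]
    linarith
end
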